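/- Let G be a simple undirected graph on vertices {1,…,n} with adjacency matrix A_G, and let I_G ⊆ ℝ[P_{11},…,P_{nn}] (polynomial ring in n² variables P_{i,j}) be the ideal generated by the polynomials (P A_G − A_G P)_{i,j} for all i,j, ∑_{i=1}^n P_{i,j} − 1 for all j, ∑_{j=1}^n P_{i,j} − 1 for all i, and P_{i,j}² − P_{i,j} for all i,j. Let V_ℝ(I_G) = {Q ∈ ℝ^{n×n} : f(Q) = 0 for all f ∈ I_G}. Then I_G equals its vanishing ideal: I_G = {f ∈ ℝ[P_{11},…,P_{nn}] : f(Q) = 0 for all Q ∈ V_ℝ(I_G)} (in particular, I_G is real radical). -/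

import Mathlib

open MvPolynomial

/-- The `n × n` matrix of variables `P_{i,j}`. -/
noncomputable def varMat (n : ℕ) : Matrix (Fin n) (Fin n) (MvPolynomial (Fin n × Fin n) ℝ) :=
  Matrix.of fun i j => X (i, j)

/-- The matrix `P A_G - A_G P` with polynomial entries. -/
noncomputable def commMat (n : ℕ) (G : SimpleGraph (Fin n)) [DecidableRel G.Adj] :
    Matrix (Fin n) (Fin n) (MvPolynomial (Fin n × Fin n) ℝ) :=
  varMat n * (G.adjMatrix ℝ).map C - (G.adjMatrix ℝ).map C * varMat n

namespace MvPolynomial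

variable {σ K : Type*} [Field K]

/-- If `e` is an eigenvector modulo `I` of every variable `X i`, with eigenvalue `x i`, then it is
an eigenvector modulo `I` of every polynomial `f`, with eigenvalue `f(x)`. -/
theorem sub_C_eval_mul_mem {I : Ideal (MvPolynomial σ K)} {x : σ → K} {e : MvPolynomial σ K}
    (he : ∀ i, (X i - C (x i)) * e ∈ I) (f : MvPolynomial σ K) :
    (f - C (eval x f)) * e ∈ I := by
  induction f using MvPolynomial.induction_on with
  | C a => simp
  | add p q hp hq =>
    convert I.add_mem hp hq using 1
    simp only [map_add]
    ring
  | mul_X p i hp =>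
    convert I.add_mem (I.mul_mem_left p (he i)) (I.mul_mem_left (C (x i)) hp) using 1
    simp only [map_mul, eval_X]
    ring

/-- The indicator polynomial of the `0/1` point with support `t`. -/
noncomputable def zeroOneIndicator [Fintype σ] [DecidableEq σ] (K : Type*) [Field K]
    (t : Finset σ) : MvPolynomial σ K :=
  (∏ i ∈ t, X i) * ∏ i ∈ Finset.univ \ t, (1 - X i)

theorem sum_zeroOneIndicator [Fintype σ] [DecidableEq σ] :
    ∑ t ∈ (Finset.univ : Finset σ).powerset, zeroOneIndicator K t = 1 := by
  have h := Finset.prod_add (fun i : σ => (X i : MvPolynomial σ K)) (fun i => 1 - X i) Finset.univ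
  simpa [zeroOneIndicator] using h.symm

theorem X_sub_C_mul_zeroOneIndicator_mem [Fintype σ] [DecidableEq σ]
    {I : Ideal (MvPolynomial σ K)} (hI : ∀ i, X i ^ 2 - X i ∈ I) (t : Finset σ) (i : σ) :
    (X i - C (if i ∈ t then 1 else 0)) * zeroOneIndicator K t ∈ I := by
  by_cases hi : i ∈ t
  · rw [zeroOneIndicator, ← Finset.mul_prod_erase t _ hi, if_pos hi]
    convert I.mul_mem_right
      ((∏ j ∈ t.erase i, X j) * ∏ j ∈ Finset.univ \ t, (1 - X j)) (hI i) using 1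
    simp only [map_one]
    ring
  · have hi' : i ∈ Finset.univ \ t := by simpa using hi
    rw [zeroOneIndicator, ← Finset.mul_prod_erase _ _ hi', if_neg hi]
    convert I.mul_mem_right
      (-((∏ j ∈ t, X j) * ∏ j ∈ (Finset.univ \ t).erase i, (1 - X j))) (hI i) using 1
    simp only [map_zero]
    ring

/-- An ideal containing all `X i ^ 2 - X i` contains every polynomial vanishing on its
zero locus. -/
theorem mem_of_eval_eq_zero_of_X_sq_sub_X_mem [Finite σ] {I : Ideal (MvPolynomial σ K)}
    (hI : ∀ i, X i ^ 2 - X i ∈ I) {f : MvPolynomial σ K}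
    (hf : ∀ x : σ → K, (∀ g ∈ I, eval x g = 0) → eval x f = 0) : f ∈ I := by
  classical
  have := Fintype.ofFinite σ
  rw [← mul_one f, ← sum_zeroOneIndicator, Finset.mul_sum]
  refine I.sum_mem fun t _ => ?_
  have key := sub_C_eval_mul_mem (X_sub_C_mul_zeroOneIndicator_mem hI t)
  by_cases hx : ∀ g ∈ I, eval (fun i => if i ∈ t then (1 : K) else 0) g = 0
  · simpa [hf _ hx] using key f
  · push Not at hx
    obtain ⟨g, hg, hgx⟩ := hx
    refine I.mul_mem_left f ?_
    have h := I.sub_mem (I.mul_mem_right (zeroOneIndicator K t) hg) (key g)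
    rw [← sub_mul, sub_sub_cancel] at h
    exact (Ideal.unit_mul_mem_iff_mem I ((isUnit_iff_ne_zero.mpr hgx).map C)).mp h

end MvPolynomial

theorem stmt_13 (n : ℕ) (G : SimpleGraph (Fin n)) [DecidableRel G.Adj]
    (I : Ideal (MvPolynomial (Fin n × Fin n) ℝ))
    (hI : I = Ideal.span (
      {p | ∃ i j : Fin n, p = commMat n G i j} ∪
      {p | ∃ j : Fin n, p = (∑ i, X (i, j)) - 1} ∪
      {p | ∃ i : Fin n, p = (∑ j, X (i, j)) - 1} ∪
      {p | ∃ i j : Fin n, p = X (i, j) ^ 2 - X (i, j)})) :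
    (I : Set (MvPolynomial (Fin n × Fin n) ℝ)) =
      {f | ∀ Q : Matrix (Fin n) (Fin n) ℝ,
        (∀ g ∈ I, MvPolynomial.eval (fun v => Q v.1 v.2) g = 0) →
        MvPolynomial.eval (fun v => Q v.1 v.2) f = 0} := by
  ext f
  refine ⟨fun hf Q hQ => hQ f hf, fun hf => mem_of_eval_eq_zero_of_X_sq_sub_X_mem ?_ ?_⟩
  · rintro ⟨i, j⟩
    rw [hI]
    exact Ideal.subset_span (Or.inr ⟨i, j, rfl⟩)
  · exact fun x hx => hf (Matrix.of fun i j => x (i, j)) hx
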